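/- Let ℓ be a loss function that is symmetric, bounded in [0,B], and satisfies the triangle inequality. Let P_1,…,P_m be probability measures on X × Y, let i ∈ {1,…,m}, and let w_1,…,w_m be nonnegative weights summing to 1, with P_w = Σ_{j=1}^m w_j P_j the mixture distribution. Then for every f ∈ F, E_{(x,y)∼P_i}[ℓ(f(x),y)] ≤ E_{(x,y)∼P_w}[ℓ(f(x),y)] + Σ_{j=1}^m w_j d_F((P_i)_X,(P_j)_X) + λ, where λ = inf_{g∈F} ( E_{(x,y)∼P_i}[ℓ(g(x),y)] + E_{(x,y)∼P_w}[ℓ(g(x),y)] ) and (P)_X denotes the X-marginal of P. -/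

import Mathlib

open MeasureTheory

/-- The discrepancy distance between two measures `P` and `Q` on `X`, relative to a
function class `F : Set (X → Yhat)` and a loss `ℓ : Yhat → Yhat → ℝ`. -/
noncomputable def discrepancy {X Yhat : Type*} [MeasurableSpace X]
    (F : Set (X → Yhat)) (ℓ : Yhat → Yhat → ℝ) (P Q : Measure X) : ℝ :=
  sSup {d : ℝ | ∃ f ∈ F, ∃ f' ∈ F,
    d = |(∫ x, ℓ (f x) (f' x) ∂P) - ∫ x, ℓ (f x) (f' x) ∂Q|}

/-!
Fix a target `Q`, one source `P` and a competitor `g ∈ F`. Passing from `f` to `g` by the triangle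
inequality, from `Q` to `P` by the discrepancy, and back through the label by the triangle
inequality again, one gets
`E_Q ℓ(f, y) ≤ E_Q ℓ(g, y) + E_Q ℓ(f, g) ≤ E_Q ℓ(g, y) + E_P ℓ(f, g) + d_F(Q, P)`
and `E_P ℓ(f, g) ≤ E_P ℓ(f, y) + E_P ℓ(g, y)`. Since risks are linear in the source, averaging
over the sources gives the bound for the mixture, and it remains to take the infimum over `g`.
-/

theorem integral_sum_ofReal_smul_measure {α E ι : Type*} [MeasurableSpace α]
    [NormedAddCommGroup E] [NormedSpace ℝ E] {s : Finset ι} {μ : ι → Measure α} {w : ι → ℝ}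
    {φ : α → E} (hw : ∀ j ∈ s, 0 ≤ w j) (hφ : ∀ j ∈ s, Integrable φ (μ j)) :
    ∫ x, φ x ∂(∑ j ∈ s, ENNReal.ofReal (w j) • μ j) = ∑ j ∈ s, w j • ∫ x, φ x ∂(μ j) := by
  rw [integral_finsetSum_measure fun j hj => (hφ j hj).smul_measure ENNReal.ofReal_ne_top]
  refine Finset.sum_congr rfl fun j hj => ?_
  rw [integral_smul_measure, ENNReal.toReal_ofReal (hw j hj)]

section Risk

variable {X Yhat : Type*} [MeasurableSpace X] {ℓ : Yhat → Yhat → ℝ} {F : Set (X → Yhat)}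
  {f g : X → Yhat}

theorem loss_nonneg (hsymm : ∀ a b, ℓ a b = ℓ b a) (htri : ∀ a b c, ℓ a c ≤ ℓ a b + ℓ b c)
    (a b : Yhat) : 0 ≤ ℓ a b := by
  linarith [htri a a b, htri a b a, hsymm a b]

theorem loss_le_loss_add_loss_right (hsymm : ∀ a b, ℓ a b = ℓ b a)
    (htri : ∀ a b c, ℓ a c ≤ ℓ a b + ℓ b c) (a b c : Yhat) : ℓ a b ≤ ℓ a c + ℓ b c :=
  hsymm b c ▸ htri a c b

/-- The expected loss `E_{x ∼ P} [ℓ (f x) (g x)]` between two predictors. -/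
noncomputable def disagreement (ℓ : Yhat → Yhat → ℝ) (f g : X → Yhat) (P : Measure X) : ℝ :=
  ∫ x, ℓ (f x) (g x) ∂P

/-- The set of real numbers of which `discrepancy F ℓ P Q` is the supremum. As `sSup` is `0` on
sets that are not bounded above, the discrepancy controls disagreements only when this set is
bounded above. -/
def disagreementGaps (F : Set (X → Yhat)) (ℓ : Yhat → Yhat → ℝ) (P Q : Measure X) : Set ℝ :=
  {d : ℝ | ∃ f ∈ F, ∃ g ∈ F, d = |disagreement ℓ f g P - disagreement ℓ f g Q|}

theorem disagreement_le_disagreement_add_discrepancy {P Q : Measure X}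
    (hbdd : BddAbove (disagreementGaps F ℓ P Q)) (hf : f ∈ F) (hg : g ∈ F) :
    disagreement ℓ f g P ≤ disagreement ℓ f g Q + discrepancy F ℓ P Q := by
  have hgap : |disagreement ℓ f g P - disagreement ℓ f g Q| ≤ discrepancy F ℓ P Q :=
    le_csSup hbdd ⟨f, hf, g, hg, rfl⟩
  exact sub_le_iff_le_add'.mp ((le_abs_self _).trans hgap)

theorem bddAbove_disagreementGaps {B : ℝ} (hB : ∀ a b, ‖ℓ a b‖ ≤ B) (F : Set (X → Yhat))
    (P Q : Measure X) [IsFiniteMeasure P] [IsFiniteMeasure Q] :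
    BddAbove (disagreementGaps F ℓ P Q) := by
  have hle (f g : X → Yhat) (μ : Measure X) [IsFiniteMeasure μ] :
      |disagreement ℓ f g μ| ≤ B * μ.real Set.univ :=
    norm_integral_le_of_norm_le_const (.of_forall fun x => hB (f x) (g x))
  refine ⟨B * P.real Set.univ + B * Q.real Set.univ, ?_⟩
  rintro _ ⟨f, -, g, -, rfl⟩
  exact (abs_sub _ _).trans (add_le_add (hle f g P) (hle f g Q))

variable [MeasurableSpace Yhat]

/-- The risk `E_{(x, y) ∼ ρ} [ℓ (f x) y]` of the predictor `f`. -/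
noncomputable def risk (ℓ : Yhat → Yhat → ℝ) (f : X → Yhat) (ρ : Measure (X × Yhat)) : ℝ :=
  ∫ z, ℓ (f z.1) z.2 ∂ρ

theorem integrable_loss_label {B : ℝ} (hB : ∀ a b, ‖ℓ a b‖ ≤ B)
    (hℓ : Measurable fun p : Yhat × Yhat => ℓ p.1 p.2) (hf : Measurable f)
    (ρ : Measure (X × Yhat)) [IsFiniteMeasure ρ] :
    Integrable (fun z => ℓ (f z.1) z.2) ρ :=
  .of_bound (hℓ.comp ((hf.comp measurable_fst).prodMk measurable_snd)).aestronglyMeasurable B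
    (.of_forall fun z => hB (f z.1) z.2)

section TriangleInequality

variable {ρ : Measure (X × Yhat)}

theorem integrable_loss_fst (hsymm : ∀ a b, ℓ a b = ℓ b a)
    (htri : ∀ a b c, ℓ a c ≤ ℓ a b + ℓ b c)
    (hfg : AEStronglyMeasurable (fun x => ℓ (f x) (g x)) ρ.fst)
    (hf : Integrable (fun z => ℓ (f z.1) z.2) ρ) (hg : Integrable (fun z => ℓ (g z.1) z.2) ρ) :
    Integrable (fun z => ℓ (f z.1) (g z.1)) ρ := by
  refine (hf.add hg).mono' (hfg.comp_measurable measurable_fst) (.of_forall fun z => ?_)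
  rw [Real.norm_of_nonneg (loss_nonneg hsymm htri _ _)]
  exact loss_le_loss_add_loss_right hsymm htri _ _ _

theorem disagreement_fst (hfg : AEStronglyMeasurable (fun x => ℓ (f x) (g x)) ρ.fst) :
    disagreement ℓ f g ρ.fst = ∫ z, ℓ (f z.1) (g z.1) ∂ρ :=
  integral_map measurable_fst.aemeasurable hfg

theorem disagreement_fst_le_risk_add_risk (hsymm : ∀ a b, ℓ a b = ℓ b a)
    (htri : ∀ a b c, ℓ a c ≤ ℓ a b + ℓ b c)
    (hfg : AEStronglyMeasurable (fun x => ℓ (f x) (g x)) ρ.fst)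
    (hf : Integrable (fun z => ℓ (f z.1) z.2) ρ) (hg : Integrable (fun z => ℓ (g z.1) z.2) ρ) :
    disagreement ℓ f g ρ.fst ≤ risk ℓ f ρ + risk ℓ g ρ :=
  calc disagreement ℓ f g ρ.fst = ∫ z, ℓ (f z.1) (g z.1) ∂ρ := disagreement_fst hfg
    _ ≤ ∫ z, (ℓ (f z.1) z.2 + ℓ (g z.1) z.2) ∂ρ :=
      integral_mono (integrable_loss_fst hsymm htri hfg hf hg) (hf.add hg)
        fun _ => loss_le_loss_add_loss_right hsymm htri _ _ _
    _ = risk ℓ f ρ + risk ℓ g ρ := integral_add hf hg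

theorem risk_le_disagreement_fst_add_risk (hsymm : ∀ a b, ℓ a b = ℓ b a)
    (htri : ∀ a b c, ℓ a c ≤ ℓ a b + ℓ b c)
    (hfg : AEStronglyMeasurable (fun x => ℓ (f x) (g x)) ρ.fst)
    (hf : Integrable (fun z => ℓ (f z.1) z.2) ρ) (hg : Integrable (fun z => ℓ (g z.1) z.2) ρ) :
    risk ℓ f ρ ≤ disagreement ℓ f g ρ.fst + risk ℓ g ρ := by
  have hint := integrable_loss_fst hsymm htri hfg hf hg
  calc risk ℓ f ρ ≤ ∫ z, (ℓ (f z.1) (g z.1) + ℓ (g z.1) z.2) ∂ρ :=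
        integral_mono hf (hint.add hg) fun _ => htri _ _ _
    _ = disagreement ℓ f g ρ.fst + risk ℓ g ρ := by
        rw [integral_add hint hg, disagreement_fst hfg, risk]

end TriangleInequality

theorem risk_le_risk_add_discrepancy_add_risk_add_risk (hsymm : ∀ a b, ℓ a b = ℓ b a)
    (htri : ∀ a b c, ℓ a c ≤ ℓ a b + ℓ b c) {Q P : Measure (X × Yhat)}
    (hfg : Measurable fun x => ℓ (f x) (g x))
    (hfQ : Integrable (fun z => ℓ (f z.1) z.2) Q) (hgQ : Integrable (fun z => ℓ (g z.1) z.2) Q)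
    (hfP : Integrable (fun z => ℓ (f z.1) z.2) P) (hgP : Integrable (fun z => ℓ (g z.1) z.2) P)
    (hbdd : BddAbove (disagreementGaps F ℓ Q.fst P.fst)) (hf : f ∈ F) (hg : g ∈ F) :
    risk ℓ f Q ≤ risk ℓ f P + discrepancy F ℓ Q.fst P.fst + (risk ℓ g Q + risk ℓ g P) := by
  have htarget : risk ℓ f Q ≤ disagreement ℓ f g Q.fst + risk ℓ g Q :=
    risk_le_disagreement_fst_add_risk hsymm htri hfg.aestronglyMeasurable hfQ hgQ
  have htransfer :
      disagreement ℓ f g Q.fst ≤ disagreement ℓ f g P.fst + discrepancy F ℓ Q.fst P.fst :=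
    disagreement_le_disagreement_add_discrepancy hbdd hf hg
  have hsource : disagreement ℓ f g P.fst ≤ risk ℓ f P + risk ℓ g P :=
    disagreement_fst_le_risk_add_risk hsymm htri hfg.aestronglyMeasurable hfP hgP
  linarith

theorem risk_le_mixture_risk_add_weighted_discrepancy_general {ι : Type*} [Fintype ι]
    (hsymm : ∀ a b, ℓ a b = ℓ b a) (htri : ∀ a b c, ℓ a c ≤ ℓ a b + ℓ b c)
    (hmeas : ∀ f ∈ F, ∀ g ∈ F, Measurable fun x => ℓ (f x) (g x))
    {Q : Measure (X × Yhat)} {P : ι → Measure (X × Yhat)}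
    (hQ : ∀ g ∈ F, Integrable (fun z => ℓ (g z.1) z.2) Q)
    (hP : ∀ j, ∀ g ∈ F, Integrable (fun z => ℓ (g z.1) z.2) (P j))
    (hbdd : ∀ j, BddAbove (disagreementGaps F ℓ Q.fst (P j).fst))
    {w : ι → ℝ} (hw : ∀ j, 0 ≤ w j) (hw1 : ∑ j, w j = 1) (hf : f ∈ F) :
    risk ℓ f Q ≤ risk ℓ f (∑ j, ENNReal.ofReal (w j) • P j)
      + ∑ j, w j * discrepancy F ℓ Q.fst (P j).fst
      + sInf {r : ℝ | ∃ g ∈ F,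
          r = risk ℓ g Q + risk ℓ g (∑ j, ENNReal.ofReal (w j) • P j)} := by
  have hmix : ∀ g ∈ F,
      risk ℓ g (∑ j, ENNReal.ofReal (w j) • P j) = ∑ j, w j * risk ℓ g (P j) := fun g hg =>
    integral_sum_ofReal_smul_measure (fun j _ => hw j) fun j _ => hP j g hg
  rw [← sub_le_iff_le_add']
  refine le_csInf ⟨_, f, hf, rfl⟩ ?_
  rintro _ ⟨g, hg, rfl⟩
  rw [sub_le_iff_le_add', hmix f hf, hmix g hg]
  calc risk ℓ f Q = ∑ j, w j * risk ℓ f Q := by rw [← Finset.sum_mul, hw1, one_mul]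
    _ ≤ ∑ j, w j * (risk ℓ f (P j) + discrepancy F ℓ Q.fst (P j).fst
          + (risk ℓ g Q + risk ℓ g (P j))) :=
        Finset.sum_le_sum fun j _ => mul_le_mul_of_nonneg_left
          (risk_le_risk_add_discrepancy_add_risk_add_risk hsymm htri (hmeas f hf g hg)
            (hQ f hf) (hQ g hg) (hP j f hf) (hP j g hg) (hbdd j) hf hg) (hw j)
    _ = ∑ j, w j * risk ℓ f (P j) + ∑ j, w j * discrepancy F ℓ Q.fst (P j).fst
          + (risk ℓ g Q + ∑ j, w j * risk ℓ g (P j)) := by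
        simp only [mul_add, Finset.sum_add_distrib, ← Finset.sum_mul, hw1, one_mul]

end Risk

/-- For a symmetric loss bounded in `[0,B]` satisfying the triangle inequality, the risk
of any `f ∈ F` under the target `P i` is bounded by its risk under the mixture
`P_w = Σ_j w_j P_j`, plus the weighted sum of discrepancies between marginals, plus
`λ = inf_{g∈F} (risk_{P_i}(g) + risk_{P_w}(g))`. -/
theorem risk_le_mixture_risk_add_weighted_discrepancy
    {X Yhat : Type*} [MeasurableSpace X] [MeasurableSpace Yhat]
    (B : ℝ) (ℓ : Yhat → Yhat → ℝ)
    (hsymm : ∀ a b, ℓ a b = ℓ b a)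
    (hbound : ∀ a b, ℓ a b ∈ Set.Icc 0 B)
    (htri : ∀ a b c, ℓ a c ≤ ℓ a b + ℓ b c)
    (hℓmeas : Measurable fun p : Yhat × Yhat => ℓ p.1 p.2)
    (F : Set (X → Yhat)) (hF : ∀ f ∈ F, Measurable f)
    (m : ℕ) (P : Fin m → Measure (X × Yhat)) [∀ j, IsProbabilityMeasure (P j)]
    (i : Fin m)
    (w : Fin m → ℝ) (hw : ∀ j, 0 ≤ w j) (hw1 : ∑ j, w j = 1)
    (f : X → Yhat) (hf : f ∈ F) :
    (∫ z, ℓ (f z.1) z.2 ∂(P i)) ≤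
      (∫ z, ℓ (f z.1) z.2 ∂(∑ j, ENNReal.ofReal (w j) • P j))
        + (∑ j, w j * discrepancy F ℓ ((P i).map Prod.fst) ((P j).map Prod.fst))
        + sInf {r : ℝ | ∃ g ∈ F,
            r = (∫ z, ℓ (g z.1) z.2 ∂(P i))
              + ∫ z, ℓ (g z.1) z.2 ∂(∑ j, ENNReal.ofReal (w j) • P j)} := by
  have hB : ∀ a b, ‖ℓ a b‖ ≤ B := fun a b =>
    (Real.norm_of_nonneg (hbound a b).1).trans_le (hbound a b).2
  exact risk_le_mixture_risk_add_weighted_discrepancy_general hsymm htri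
    (fun f hf g hg => hℓmeas.comp ((hF f hf).prodMk (hF g hg)))
    (fun g hg => integrable_loss_label hB hℓmeas (hF g hg) (P i))
    (fun j g hg => integrable_loss_label hB hℓmeas (hF g hg) (P j))
    (fun j => bddAbove_disagreementGaps hB F (P i).fst (P j).fst) hw hw1 hf
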